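/- The minimum, over all spanning trees T of G, of the diameter D(T) equals exactly 2·R_gen(G), twice the generalized radius of G; moreover D(G) ≤ min_T D(T) ≤ 2·R(G), where R(G) is the (vertex) radius of G. -/

import Mathlib

/-- The weight of a walk: the sum of the weights of its edges. -/
noncomputable def walkWeight {V : Type*} (w : V → V → ℝ) {G : SimpleGraph V} {u v : V}
    (p : G.Walk u v) : ℝ :=
  (p.darts.map fun d => w d.toProd.1 d.toProd.2).sum

/-- The weighted distance between two vertices: the least weight of a walk joining them. -/
noncomputable def wdist {V : Type*} (G : SimpleGraph V) (w : V → V → ℝ) (u v : V) : ℝ :=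
  sInf {x : ℝ | ∃ p : G.Walk u v, walkWeight w p = x}

/-!
Regard an edge `ab` as a segment of length `w a b`, and let `p` be its point at distance `α` from
`a`. A shortest-path tree rooted at `p` preserves the distances to `p`, so its diameter is at most
twice the eccentricity of `p`. If the edge `ab` is itself so long that the shortest route from `p`
to one endpoint leads through the other, the tree is rooted at that other endpoint instead.
Conversely, the midpoint `p` of a longest path from `u` to `v` in a tree `T` lies on an edge whose
removal separates `u` from `v`. Every vertex `z` is then separated by `p` from one of `u` and `v`,
so the distance from `z` to `p` in `T` is at most half of the diameter of `T`, and it can only be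
smaller in `G`.
-/

open SimpleGraph

section WalkWeight

variable {V : Type*} {G T : SimpleGraph V} {w : V → V → ℝ} {u v x : V}

theorem walkWeight_nil : walkWeight w (Walk.nil : G.Walk u u) = 0 := by
  simp [walkWeight]

theorem walkWeight_cons (h : G.Adj u v) (p : G.Walk v x) :
    walkWeight w (Walk.cons h p) = w u v + walkWeight w p := by
  simp [walkWeight]

theorem walkWeight_append (p : G.Walk u v) (q : G.Walk v x) :
    walkWeight w (p.append q) = walkWeight w p + walkWeight w q := by
  simp [walkWeight]

theorem walkWeight_reverse (hws : ∀ a b, w a b = w b a) (p : G.Walk u v) :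
    walkWeight w p.reverse = walkWeight w p := by
  simp [walkWeight, Function.comp_def, List.sum_reverse, hws]

theorem walkWeight_mapLe (hTG : T ≤ G) (p : T.Walk u v) :
    walkWeight w (p.mapLe hTG) = walkWeight w p := by
  simp [walkWeight, Function.comp_def]

theorem walkWeight_nonneg (hw : ∀ a b, G.Adj a b → 0 ≤ w a b) (p : G.Walk u v) :
    0 ≤ walkWeight w p := by
  refine List.sum_nonneg fun _ hx => ?_
  obtain ⟨d, -, rfl⟩ := List.mem_map.1 hx
  exact hw _ _ d.adj

end WalkWeight

section WeightedDistance

variable {V : Type*} {G T : SimpleGraph V} {w : V → V → ℝ} {u v : V}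

theorem wdist_le_walkWeight (hw : ∀ a b, G.Adj a b → 0 ≤ w a b) (p : G.Walk u v) :
    wdist G w u v ≤ walkWeight w p :=
  csInf_le ⟨0, by rintro _ ⟨q, rfl⟩; exact walkWeight_nonneg hw q⟩ ⟨p, rfl⟩

theorem le_wdist (hG : G.Connected) {c : ℝ} (h : ∀ p : G.Walk u v, c ≤ walkWeight w p) :
    c ≤ wdist G w u v := by
  have : Nonempty (G.Walk u v) := hG.preconnected u v
  exact le_ciInf h

theorem wdist_nonneg (hw : ∀ a b, G.Adj a b → 0 ≤ w a b) (u v : V) : 0 ≤ wdist G w u v :=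
  Real.iInf_nonneg (walkWeight_nonneg hw)

theorem wdist_self (hw : ∀ a b, G.Adj a b → 0 ≤ w a b) (u : V) : wdist G w u u = 0 :=
  le_antisymm ((wdist_le_walkWeight hw Walk.nil).trans_eq walkWeight_nil) (wdist_nonneg hw u u)

theorem wdist_le_of_adj (hw : ∀ a b, G.Adj a b → 0 ≤ w a b) (h : G.Adj u v) :
    wdist G w u v ≤ w u v := by
  simpa [walkWeight_cons, walkWeight_nil] using wdist_le_walkWeight hw (Walk.cons h Walk.nil)

theorem wdist_triangle (hG : G.Connected) (hw : ∀ a b, G.Adj a b → 0 ≤ w a b) (u v x : V) :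
    wdist G w u x ≤ wdist G w u v + wdist G w v x := by
  have : Nonempty (G.Walk u v) := hG.preconnected u v
  have : Nonempty (G.Walk v x) := hG.preconnected v x
  exact le_ciInf_add_ciInf fun p q =>
    (wdist_le_walkWeight hw (p.append q)).trans_eq (walkWeight_append p q)

theorem wdist_le_add_of_adj (hG : G.Connected) (hw : ∀ a b, G.Adj a b → 0 ≤ w a b)
    (h : G.Adj u v) (x : V) : wdist G w u x ≤ w u v + wdist G w v x :=
  (wdist_triangle hG hw u v x).trans (by gcongr; exact wdist_le_of_adj hw h)

theorem wdist_comm (hG : G.Connected) (hw : ∀ a b, G.Adj a b → 0 ≤ w a b)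
    (hws : ∀ a b, w a b = w b a) (u v : V) : wdist G w u v = wdist G w v u := by
  have wdist_le_swap (u v : V) : wdist G w u v ≤ wdist G w v u := le_wdist hG fun p =>
    (wdist_le_walkWeight hw p.reverse).trans_eq (walkWeight_reverse hws p)
  exact le_antisymm (wdist_le_swap u v) (wdist_le_swap v u)

theorem wdist_anti (hT : T.Connected) (hTG : T ≤ G) (hw : ∀ a b, G.Adj a b → 0 ≤ w a b)
    (u v : V) : wdist G w u v ≤ wdist T w u v :=
  le_wdist hT fun p => (wdist_le_walkWeight hw (p.mapLe hTG)).trans_eq (walkWeight_mapLe hTG p)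

theorem exists_adj_wdist_eq_add [Finite V] (hG : G.Connected)
    (hw : ∀ a b, G.Adj a b → 0 ≤ w a b) (huv : u ≠ v) :
    ∃ b, G.Adj u b ∧ wdist G w u v = w u b + wdist G w b v := by
  obtain ⟨p⟩ := hG.preconnected u v
  obtain ⟨c, hc, -⟩ := p.exists_eq_cons_of_ne huv
  obtain ⟨b, hb, hmin⟩ := Set.exists_min_image {b | G.Adj u b}
    (fun b => w u b + wdist G w b v) (Set.toFinite _) ⟨c, hc⟩
  refine ⟨b, hb, le_antisymm (wdist_le_add_of_adj hG hw hb v) (le_wdist hG fun q => ?_)⟩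
  obtain ⟨y, hy, q, rfl⟩ := q.exists_eq_cons_of_ne huv
  calc w u b + wdist G w b v
      ≤ w u y + wdist G w y v := hmin y hy
    _ ≤ w u y + walkWeight w q := by gcongr; exact wdist_le_walkWeight hw q
    _ = walkWeight w (Walk.cons hy q) := (walkWeight_cons hy q).symm

theorem wdist_pos [Finite V] (hG : G.Connected) (hw : ∀ a b, G.Adj a b → 0 < w a b)
    (huv : u ≠ v) : 0 < wdist G w u v := by
  have hw₀ : ∀ a b, G.Adj a b → 0 ≤ w a b := fun a b h => (hw a b h).le
  obtain ⟨b, hub, hdist⟩ := exists_adj_wdist_eq_add hG hw₀ huv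
  rw [hdist]
  exact add_pos_of_pos_of_nonneg (hw u b hub) (wdist_nonneg hw₀ b v)

/-- On a geodesic from `u` to `v`, some edge contains the point at distance `t` from `u`. -/
theorem exists_adj_wdist_le_lt [Finite V] (hG : G.Connected)
    (hw : ∀ a b, G.Adj a b → 0 < w a b) {t : ℝ} (ht : 0 ≤ t) (htuv : t < wdist G w u v) :
    ∃ a b, G.Adj a b ∧ wdist G w u a + w a b + wdist G w b v = wdist G w u v ∧
      wdist G w u a ≤ t ∧ t < wdist G w u a + w a b := by
  have hw₀ : ∀ a b, G.Adj a b → 0 ≤ w a b := fun a b h => (hw a b h).le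
  obtain ⟨a, ⟨ha, hat⟩, hmax⟩ := Set.exists_max_image
    {a | wdist G w u a + wdist G w a v = wdist G w u v ∧ wdist G w u a ≤ t}
    (fun a => wdist G w u a) (Set.toFinite _)
    ⟨u, by simp [wdist_self hw₀], by rwa [wdist_self hw₀]⟩
  have hav : a ≠ v := by
    rintro rfl
    exact hat.not_gt htuv
  obtain ⟨b, hab, hdist⟩ := exists_adj_wdist_eq_add hG hw₀ hav
  have hub : wdist G w u b = wdist G w u a + w a b := by
    apply le_antisymm
    · linarith [wdist_triangle hG hw₀ u a b, wdist_le_of_adj hw₀ hab]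
    · linarith [wdist_triangle hG hw₀ u b v]
  refine ⟨a, b, hab, by linarith, hat, ?_⟩
  by_contra! hbt
  linarith [hmax b ⟨by linarith, by linarith⟩, hw a b hab]

end WeightedDistance

section ParentTree

variable {V : Type*} [Finite V] {G T : SimpleGraph V}

theorem wellFounded_comp_lt {β : Type*} [Preorder β] (rank : V → β) :
    WellFounded fun x y => rank x < rank y :=
  letI := Preorder.lift rank
  (inferInstance : WellFoundedLT V).wf

theorem connected_of_exists_adj_lt {β : Type*} [Preorder β] (rank : V → β) (r : V)
    (h : ∀ z ≠ r, ∃ y, G.Adj z y ∧ rank y < rank z) : G.Connected := by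
  have reachable_root (z : V) : G.Reachable z r := by
    induction z using (wellFounded_comp_lt rank).induction with
    | _ z ih =>
      obtain rfl | hz := eq_or_ne z r
      · rfl
      · obtain ⟨y, hzy, hlt⟩ := h z hz
        exact hzy.reachable.trans (ih y hlt)
  exact (connected_iff_exists_forall_reachable G).2 ⟨r, fun z => (reachable_root z).symm⟩

theorem isTree_of_forall_adj_parent (hT : T.Connected) (r : V) (parent : V → V)
    (h : ∀ x y, T.Adj x y → (x ≠ r ∧ y = parent x) ∨ (y ≠ r ∧ x = parent y)) : T.IsTree := by
  have edgeSet_subset : T.edgeSet ⊆ (fun z => s(z, parent z)) '' {r}ᶜ := by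
    rintro ⟨x, y⟩ hxy
    obtain ⟨hx, rfl⟩ | ⟨hy, rfl⟩ := h x y hxy
    · exact ⟨x, hx, rfl⟩
    · exact ⟨y, hy, Sym2.eq_swap⟩
  have card_edgeSet_le : T.edgeSet.ncard ≤ ({r}ᶜ : Set V).ncard :=
    (Set.ncard_le_ncard edgeSet_subset).trans Set.ncard_image_le
  have card_compl : ({r}ᶜ : Set V).ncard + 1 = Nat.card V := by
    rw [← Set.ncard_compl_add_ncard {r}, Set.ncard_singleton]
  refine isTree_iff_connected_and_card.2
    ⟨hT, le_antisymm ?_ hT.card_vert_le_card_edgeSet_add_one⟩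
  rw [Nat.card_coe_set_eq]
  lia

theorem exists_isTree_of_exists_adj_lt {β : Type*} [Preorder β] (rank : V → β) (r : V)
    (P : V → V → Prop) (h : ∀ z ≠ r, ∃ y, G.Adj z y ∧ rank y < rank z ∧ P z y) :
    ∃ T ≤ G, T.IsTree ∧ ∀ z ≠ r, ∃ y, T.Adj z y ∧ P z y := by
  choose! parent hadj hlt hP using h
  let T : SimpleGraph V := fromRel fun x y => x ≠ r ∧ y = parent x
  have adj_parent (z : V) (hz : z ≠ r) : T.Adj z (parent z) :=
    (fromRel_adj _ _ _).2 ⟨(hadj z hz).ne, Or.inl ⟨hz, rfl⟩⟩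
  have eq_parent (x y : V) (hxy : T.Adj x y) :
      (x ≠ r ∧ y = parent x) ∨ (y ≠ r ∧ x = parent y) :=
    ((fromRel_adj _ _ _).1 hxy).2
  have hT : T.Connected := connected_of_exists_adj_lt rank r fun z hz =>
    ⟨parent z, adj_parent z hz, hlt z hz⟩
  refine ⟨T, fun x y hxy => ?_, isTree_of_forall_adj_parent hT r parent eq_parent,
    fun z hz => ⟨parent z, adj_parent z hz, hP z hz⟩⟩
  obtain ⟨hx, rfl⟩ | ⟨hy, rfl⟩ := eq_parent x y hxy
  · exact hadj x hx
  · exact (hadj y hy).symm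

theorem exists_isTree_adj_of_exists_adj_lt {β : Type*} [Preorder β] (rank : V → β) {a b : V}
    (hab : G.Adj a b) (P : V → V → Prop)
    (h : ∀ z ∉ ({a, b} : Set V), ∃ y, G.Adj z y ∧ rank y < rank z ∧ P z y) :
    ∃ T ≤ G, T.IsTree ∧ T.Adj a b ∧ ∀ z ∉ ({a, b} : Set V), ∃ y, T.Adj z y ∧ P z y := by
  classical
  -- Lowering the rank of the root `a` to `⊥` lets `a` be the parent of `b` whatever their ranks.
  obtain ⟨T, hTG, hT, hstep⟩ := exists_isTree_of_exists_adj_lt (G := G)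
    (Function.update (fun z => (rank z : WithBot β)) a ⊥) a
    (fun z y => if z = b then y = a else P z y) fun z hza => by
      obtain rfl | hzb := eq_or_ne z b
      · exact ⟨a, hab.symm, by simp [hza], by simp⟩
      · obtain ⟨y, hzy, hlt, hP⟩ := h z (by simp [hza, hzb])
        refine ⟨y, hzy, ?_, by rwa [if_neg hzb]⟩
        obtain rfl | hya := eq_or_ne y a <;> simp [*]
  have hba : T.Adj b a := by
    obtain ⟨y, hby, hy⟩ := hstep b hab.ne'
    rwa [(if_pos rfl).mp hy] at hby
  refine ⟨T, hTG, hT, hba.symm, fun z hz => ?_⟩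
  obtain ⟨hza, hzb⟩ : z ≠ a ∧ z ≠ b := by simpa using hz
  simpa [hzb] using hstep z hza

theorem exists_mem_wdist_add_le {w : V → V → ℝ} (hT : T.Connected)
    (hw : ∀ a b, T.Adj a b → 0 < w a b) (f : V → ℝ) (S : Set V)
    (h : ∀ z ∉ S, ∃ y, T.Adj z y ∧ w z y + f y ≤ f z) (z : V) :
    ∃ s ∈ S, wdist T w z s + f s ≤ f z := by
  have hw₀ : ∀ a b, T.Adj a b → 0 ≤ w a b := fun a b h => (hw a b h).le
  induction z using (wellFounded_comp_lt f).induction with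
  | _ z ih =>
    by_cases hz : z ∈ S
    · exact ⟨z, hz, by rw [wdist_self hw₀, zero_add]⟩
    · obtain ⟨y, hzy, hy⟩ := h z hz
      obtain ⟨s, hs, hys⟩ := ih y (by linarith [hw z y hzy])
      exact ⟨s, hs, by linarith [wdist_le_add_of_adj hT hw₀ hzy s]⟩

end ParentTree

section EdgePoint

variable {V : Type*} {G T : SimpleGraph V} {w : V → V → ℝ} {a b : V} {α : ℝ}

/-- The distance in `G` from the vertex `z` to the point of the edge `ab`, seen as a segment of
length `w a b`, that lies at distance `α` from `a` along this edge. -/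
noncomputable def edgePointDist (G : SimpleGraph V) (w : V → V → ℝ) (a b : V) (α : ℝ) (z : V) : ℝ :=
  min (α + wdist G w a z) (w a b - α + wdist G w b z)

theorem edgePointDist_anti (hT : T.Connected) (hTG : T ≤ G)
    (hw : ∀ a b, G.Adj a b → 0 ≤ w a b) (a b : V) (α : ℝ) (z : V) :
    edgePointDist G w a b α z ≤ edgePointDist T w a b α z := by
  unfold edgePointDist
  gcongr <;> exact wdist_anti hT hTG hw _ z

theorem edgePointDist_nonneg (hw : ∀ a b, G.Adj a b → 0 ≤ w a b) (hα : α ∈ Set.Icc 0 (w a b))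
    (z : V) : 0 ≤ edgePointDist G w a b α z :=
  le_min (add_nonneg hα.1 (wdist_nonneg hw a z))
    (add_nonneg (sub_nonneg.2 hα.2) (wdist_nonneg hw b z))

theorem edgePointDist_swap (hws : ∀ a b, w a b = w b a) (a b : V) (α : ℝ) (z : V) :
    edgePointDist G w b a (w a b - α) z = edgePointDist G w a b α z := by
  rw [edgePointDist, edgePointDist, hws b a, sub_sub_cancel, min_comm]

theorem wdist_le_edgePointDist_of_lt (hG : G.Connected) (hw : ∀ a b, G.Adj a b → 0 ≤ w a b)
    (hα : α ≤ w a b) (ha : edgePointDist G w a b α a < α) (z : V) :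
    wdist G w b z ≤ edgePointDist G w a b α z := by
  have detour_lt : w a b - α + wdist G w b a < α := by
    simpa only [edgePointDist, wdist_self hw, add_zero, min_lt_iff, lt_irrefl, false_or] using ha
  exact le_min (by linarith [wdist_triangle hG hw b a z]) (by linarith)

theorem wdist_le_edgePointDist_add (hG : G.Connected) (hw : ∀ a b, G.Adj a b → 0 ≤ w a b)
    (hws : ∀ a b, w a b = w b a) (hab : G.Adj a b) (hα : α ∈ Set.Icc 0 (w a b)) (u v : V) :
    wdist G w u v ≤ edgePointDist G w a b α u + edgePointDist G w a b α v := by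
  obtain ⟨hα₀, hα₁⟩ := hα
  have via_a := wdist_triangle hG hw u a v
  have via_b := wdist_triangle hG hw u b v
  have via_ab := wdist_le_add_of_adj hG hw hab v
  have via_ba := wdist_le_add_of_adj hG hw hab.symm v
  rw [hws b a] at via_ba
  rw [wdist_comm hG hw hws u a] at via_a
  rw [wdist_comm hG hw hws u b] at via_b
  unfold edgePointDist
  rcases min_choice (α + wdist G w a u) (w a b - α + wdist G w b u) with hu | hu <;>
    rcases min_choice (α + wdist G w a v) (w a b - α + wdist G w b v) with hv | hv <;>
    rw [hu, hv] <;> linarith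

theorem exists_adj_add_edgePointDist_le [Finite V] (hG : G.Connected)
    (hw : ∀ a b, G.Adj a b → 0 ≤ w a b) (hws : ∀ a b, w a b = w b a) (α : ℝ) {z : V}
    (hza : z ≠ a) (hzb : z ≠ b) :
    ∃ y, G.Adj z y ∧ w z y + edgePointDist G w a b α y ≤ edgePointDist G w a b α z := by
  rcases min_choice (α + wdist G w a z) (w a b - α + wdist G w b z) with hz | hz
  · obtain ⟨y, hzy, hdist⟩ := exists_adj_wdist_eq_add hG hw hza
    refine ⟨y, hzy, ?_⟩
    calc w z y + edgePointDist G w a b α y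
        ≤ w z y + (α + wdist G w a y) := by gcongr; exact min_le_left _ _
      _ = α + wdist G w a z := by
          rw [wdist_comm hG hw hws a z, wdist_comm hG hw hws a y, hdist]; ring
      _ = edgePointDist G w a b α z := hz.symm
  · obtain ⟨y, hzy, hdist⟩ := exists_adj_wdist_eq_add hG hw hzb
    refine ⟨y, hzy, ?_⟩
    calc w z y + edgePointDist G w a b α y
        ≤ w z y + (w a b - α + wdist G w b y) := by gcongr; exact min_le_right _ _
      _ = w a b - α + wdist G w b z := by
          rw [wdist_comm hG hw hws b z, wdist_comm hG hw hws b y, hdist]; ring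
      _ = edgePointDist G w a b α z := hz.symm

end EdgePoint

section ShortestPathTree

variable {V : Type*} [Finite V] {G : SimpleGraph V} {w : V → V → ℝ} {a b r : V} {α c : ℝ}

theorem exists_isTree_wdist_root_le (hG : G.Connected) (hw : ∀ a b, G.Adj a b → 0 < w a b)
    (r : V) : ∃ T ≤ G, T.IsTree ∧ ∀ z, wdist T w z r ≤ wdist G w z r := by
  have hw₀ : ∀ a b, G.Adj a b → 0 ≤ w a b := fun a b h => (hw a b h).le
  obtain ⟨T, hTG, hT, hstep⟩ := exists_isTree_of_exists_adj_lt (G := G)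
    (fun z => wdist G w z r) r (fun z y => w z y + wdist G w y r ≤ wdist G w z r) fun z hz => by
      obtain ⟨y, hzy, hdist⟩ := exists_adj_wdist_eq_add hG hw₀ hz
      exact ⟨y, hzy, by linarith [hw z y hzy], hdist.ge⟩
  refine ⟨T, hTG, hT, fun z => ?_⟩
  obtain ⟨_, rfl, hz⟩ := exists_mem_wdist_add_le hT.connected (fun a b h => hw a b (hTG h))
    (fun z => wdist G w z r) {r} hstep z
  rwa [wdist_self hw₀, add_zero] at hz

/-- The hypotheses on `a` and `b` say that a shortest route from the point to either endpoint runs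
along the edge `ab` itself. -/
theorem exists_isTree_edgePointDist_le (hG : G.Connected) (hw : ∀ a b, G.Adj a b → 0 < w a b)
    (hws : ∀ a b, w a b = w b a) (hab : G.Adj a b) (ha : α ≤ edgePointDist G w a b α a)
    (hb : w a b - α ≤ edgePointDist G w a b α b) :
    ∃ T ≤ G, T.IsTree ∧ T.Adj a b ∧
      ∀ z, edgePointDist T w a b α z ≤ edgePointDist G w a b α z := by
  have hw₀ : ∀ a b, G.Adj a b → 0 ≤ w a b := fun a b h => (hw a b h).le
  set f := edgePointDist G w a b α
  obtain ⟨T, hTG, hT, hTab, hstep⟩ := exists_isTree_adj_of_exists_adj_lt f hab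
    (fun z y => w z y + f y ≤ f z) fun z hz => by
      obtain ⟨hza, hzb⟩ : z ≠ a ∧ z ≠ b := by simpa using hz
      obtain ⟨y, hzy, hy⟩ := exists_adj_add_edgePointDist_le hG hw₀ hws α hza hzb
      exact ⟨y, hzy, by linarith [hw z y hzy], hy⟩
  have hTw : ∀ a b, T.Adj a b → 0 < w a b := fun a b h => hw a b (hTG h)
  have hTw₀ : ∀ a b, T.Adj a b → 0 ≤ w a b := fun a b h => (hTw a b h).le
  refine ⟨T, hTG, hT, hTab, fun z => ?_⟩
  obtain ⟨s, rfl | rfl, hz⟩ := exists_mem_wdist_add_le hT.connected hTw f {a, b} hstep z <;>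
    rw [wdist_comm hT.connected hTw₀ hws] at hz
  · exact (min_le_left _ _).trans (by linarith)
  · exact (min_le_right _ _).trans (by linarith)

theorem exists_isTree_wdist_le_of_wdist_root_le (hG : G.Connected)
    (hw : ∀ a b, G.Adj a b → 0 < w a b) (hws : ∀ a b, w a b = w b a)
    (hr : ∀ z, wdist G w r z ≤ c) : ∃ T ≤ G, T.IsTree ∧ ∀ u v, wdist T w u v ≤ 2 * c := by
  obtain ⟨T, hTG, hT, hroot⟩ := exists_isTree_wdist_root_le hG hw r
  have hw₀ : ∀ a b, G.Adj a b → 0 ≤ w a b := fun a b h => (hw a b h).le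
  have hTw₀ : ∀ a b, T.Adj a b → 0 ≤ w a b := fun a b h => hw₀ a b (hTG h)
  have hroot_le (z : V) : wdist T w z r ≤ c :=
    (hroot z).trans ((wdist_comm hG hw₀ hws z r).trans_le (hr z))
  refine ⟨T, hTG, hT, fun u v => ?_⟩
  calc wdist T w u v
      ≤ wdist T w u r + wdist T w r v := wdist_triangle hT.connected hTw₀ u r v
    _ = wdist T w u r + wdist T w v r := by rw [wdist_comm hT.connected hTw₀ hws r v]
    _ ≤ 2 * c := by linarith [hroot_le u, hroot_le v]

theorem exists_isTree_wdist_le_of_edgePointDist_le (hG : G.Connected)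
    (hw : ∀ a b, G.Adj a b → 0 < w a b) (hws : ∀ a b, w a b = w b a) (hab : G.Adj a b)
    (hα : α ∈ Set.Icc 0 (w a b)) (hc : ∀ z, edgePointDist G w a b α z ≤ c) :
    ∃ T ≤ G, T.IsTree ∧ ∀ u v, wdist T w u v ≤ 2 * c := by
  have hw₀ : ∀ a b, G.Adj a b → 0 ≤ w a b := fun a b h => (hw a b h).le
  obtain ha | ha := lt_or_ge (edgePointDist G w a b α a) α
  · exact exists_isTree_wdist_le_of_wdist_root_le hG hw hws fun z =>
      (wdist_le_edgePointDist_of_lt hG hw₀ hα.2 ha z).trans (hc z)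
  obtain hb | hb := lt_or_ge (edgePointDist G w a b α b) (w a b - α)
  · have hα' : w a b - α ≤ w b a := by linarith [hα.1, hws a b]
    have hswap := edgePointDist_swap (G := G) hws a b α
    exact exists_isTree_wdist_le_of_wdist_root_le hG hw hws fun z =>
      (wdist_le_edgePointDist_of_lt hG hw₀ hα' ((hswap b).trans_lt hb) z).trans
        ((hswap z).trans_le (hc z))
  obtain ⟨T, hTG, hT, hTab, hle⟩ := exists_isTree_edgePointDist_le hG hw hws hab ha hb
  refine ⟨T, hTG, hT, fun u v => ?_⟩
  calc wdist T w u v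
      ≤ edgePointDist T w a b α u + edgePointDist T w a b α v :=
        wdist_le_edgePointDist_add hT.connected (fun a b h => hw₀ a b (hTG h)) hws hTab hα u v
    _ ≤ c + c := add_le_add ((hle u).trans (hc u)) ((hle v).trans (hc v))
    _ = 2 * c := (two_mul c).symm

end ShortestPathTree

section TreeCenter

variable {V : Type*} {T : SimpleGraph V} {w : V → V → ℝ} {a b u v : V}

theorem exists_cut_of_isAcyclic (hT : T.IsAcyclic) (hab : T.Adj a b) :
    ∃ S : Set V, a ∈ S ∧ b ∉ S ∧ ∀ x y, T.Adj x y → x ∈ S → y ∉ S → x = a ∧ y = b := by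
  have not_reachable : ¬(T.deleteEdges {s(a, b)}).Reachable a b :=
    isBridge_iff.1 (isAcyclic_iff_forall_adj_isBridge.1 hT hab)
  refine ⟨{z | (T.deleteEdges {s(a, b)}).Reachable a z}, Reachable.refl _, not_reachable,
    fun x y hxy hx hy => ?_⟩
  have edge_eq : s(x, y) = s(a, b) := by
    by_contra hne
    exact hy (hx.trans (Adj.reachable (deleteEdges_adj.2 ⟨hxy, hne⟩)))
  obtain h | ⟨rfl, rfl⟩ := Sym2.eq_iff.1 edge_eq
  · exact h
  · exact absurd hx not_reachable

theorem wdist_add_add_le_of_cut (hT : T.Connected) (hw : ∀ a b, T.Adj a b → 0 ≤ w a b)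
    {S : Set V} (hS : ∀ x y, T.Adj x y → x ∈ S → y ∉ S → x = a ∧ y = b) (hu : u ∈ S)
    (hv : v ∉ S) : wdist T w u a + w a b + wdist T w b v ≤ wdist T w u v := by
  refine le_wdist hT fun p => ?_
  induction p with
  | nil => exact absurd hu hv
  | @cons x y z hxy p ih =>
    rw [walkWeight_cons]
    by_cases hy : y ∈ S
    · linarith [ih hy hv, wdist_le_add_of_adj hT hw hxy a]
    · obtain ⟨rfl, rfl⟩ := hS x y hxy hu hy
      rw [wdist_self hw]
      linarith [wdist_le_walkWeight hw p]

theorem exists_edgePointDist_le_half [Finite V] (hT : T.IsTree)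
    (hw : ∀ a b, T.Adj a b → 0 < w a b) (hws : ∀ a b, w a b = w b a)
    (huv : 0 < wdist T w u v) (hmax : ∀ x y, wdist T w x y ≤ wdist T w u v) :
    ∃ a b, T.Adj a b ∧ ∃ α ∈ Set.Icc 0 (w a b),
      ∀ z, edgePointDist T w a b α z ≤ wdist T w u v / 2 := by
  have hw₀ : ∀ a b, T.Adj a b → 0 ≤ w a b := fun a b h => (hw a b h).le
  have hcomm := wdist_comm hT.connected hw₀ hws
  obtain ⟨a, b, hab, hgeod, hua, hub⟩ :=
    exists_adj_wdist_le_lt hT.connected hw (half_pos huv).le (half_lt_self huv)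
  obtain ⟨S, haS, hbS, hS⟩ := exists_cut_of_isAcyclic hT.isAcyclic hab
  have cut_le {x y : V} (hx : x ∈ S) (hy : y ∉ S) :=
    wdist_add_add_le_of_cut hT.connected hw₀ hS hx hy
  have huS : u ∈ S := by
    by_contra hu
    linarith [cut_le haS hu, wdist_nonneg hw₀ a a, hw a b hab, hcomm a u, hcomm b u,
      wdist_triangle hT.connected hw₀ u b v]
  have hvS : v ∉ S := fun hv => by
    linarith [cut_le hv hbS, wdist_nonneg hw₀ b b, hw a b hab, hcomm a v, hcomm b v,
      wdist_triangle hT.connected hw₀ u a v]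
  refine ⟨a, b, hab, wdist T w u v / 2 - wdist T w u a, ⟨by linarith, by linarith⟩, fun z => ?_⟩
  by_cases hz : z ∈ S
  · exact (min_le_left _ _).trans (by linarith [cut_le hz hvS, hmax z v, hcomm a z])
  · exact (min_le_right _ _).trans (by linarith [cut_le huS hz, hmax u z])

end TreeCenter

section Diameter

variable {V : Type*} {G T : SimpleGraph V} {w : V → V → ℝ} {c : ℝ}

/-- The weighted diameter `D(G)`. -/
noncomputable def wdiam (G : SimpleGraph V) (w : V → V → ℝ) : ℝ :=
  ⨆ u : V, ⨆ v : V, wdist G w u v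

theorem wdist_le_wdiam [Finite V] (G : SimpleGraph V) (w : V → V → ℝ) (u v : V) :
    wdist G w u v ≤ wdiam G w :=
  (le_ciSup (Set.finite_range fun v => wdist G w u v).bddAbove v).trans
    (le_ciSup (Set.finite_range fun u => ⨆ v : V, wdist G w u v).bddAbove u)

theorem wdiam_le [Nonempty V] (h : ∀ u v, wdist G w u v ≤ c) : wdiam G w ≤ c :=
  ciSup_le fun u => ciSup_le (h u)

theorem exists_wdist_eq_wdiam [Finite V] [Nonempty V] (G : SimpleGraph V) (w : V → V → ℝ) :
    ∃ u v, wdist G w u v = wdiam G w := by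
  obtain ⟨u, hu⟩ := exists_eq_ciSup_of_finite (f := fun u : V => ⨆ v : V, wdist G w u v)
  obtain ⟨v, hv⟩ := exists_eq_ciSup_of_finite (f := fun v : V => wdist G w u v)
  exact ⟨u, v, hv.trans hu⟩

theorem wdiam_nonneg (hw : ∀ a b, G.Adj a b → 0 ≤ w a b) : 0 ≤ wdiam G w :=
  Real.iSup_nonneg fun u => Real.iSup_nonneg (wdist_nonneg hw u)

theorem wdiam_pos [Finite V] [Nontrivial V] (hG : G.Connected)
    (hw : ∀ a b, G.Adj a b → 0 < w a b) : 0 < wdiam G w := by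
  obtain ⟨u, v, huv⟩ := exists_pair_ne V
  exact (wdist_pos hG hw huv).trans_le (wdist_le_wdiam G w u v)

theorem wdiam_anti [Finite V] (hT : T.Connected) (hTG : T ≤ G)
    (hw : ∀ a b, G.Adj a b → 0 ≤ w a b) : wdiam G w ≤ wdiam T w :=
  have := hT.nonempty
  wdiam_le fun u v => (wdist_anti hT hTG hw u v).trans (wdist_le_wdiam T w u v)

end Diameter

section MinimumDiameter

variable {V : Type*} {G : SimpleGraph V} {w : V → V → ℝ} {c : ℝ}

/-- The diameters of the spanning trees of `G`; the infimum of this set is `min_T D(T)`. -/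
def spanningTreeDiams (G : SimpleGraph V) (w : V → V → ℝ) : Set ℝ :=
  {x | ∃ T : SimpleGraph V, T ≤ G ∧ T.IsTree ∧ x = wdiam T w}

/-- The eccentricities `B_e(α)` of the points on the edges of `G`; the infimum of this set is the
generalized radius `R_gen(G)`. -/
def edgePointEccs (G : SimpleGraph V) (w : V → V → ℝ) : Set ℝ :=
  {x | ∃ a b : V, G.Adj a b ∧ ∃ α ∈ Set.Icc 0 (w a b), x = ⨆ z : V, edgePointDist G w a b α z}

theorem spanningTreeDiams_nonempty (hG : G.Connected) : (spanningTreeDiams G w).Nonempty := by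
  obtain ⟨T, hTG, hT⟩ := hG.exists_isTree_le
  exact ⟨_, T, hTG, hT, rfl⟩

theorem sInf_spanningTreeDiams_le [Nonempty V] (hw : ∀ a b, G.Adj a b → 0 ≤ w a b)
    (h : ∃ T ≤ G, T.IsTree ∧ ∀ u v, wdist T w u v ≤ c) : sInf (spanningTreeDiams G w) ≤ c := by
  obtain ⟨T, hTG, hT, hle⟩ := h
  have bddBelow : BddBelow (spanningTreeDiams G w) := by
    refine ⟨0, ?_⟩
    rintro _ ⟨T, hTG, -, rfl⟩
    exact wdiam_nonneg fun a b h => hw a b (hTG h)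
  exact (csInf_le bddBelow ⟨T, hTG, hT, rfl⟩).trans (wdiam_le hle)

theorem edgePointEccs_nonempty (hw : ∀ a b, G.Adj a b → 0 ≤ w a b) (hE : ∃ a b, G.Adj a b) :
    (edgePointEccs G w).Nonempty := by
  obtain ⟨a, b, hab⟩ := hE
  exact ⟨_, a, b, hab, 0, Set.left_mem_Icc.2 (hw a b hab), rfl⟩

theorem bddBelow_edgePointEccs (hw : ∀ a b, G.Adj a b → 0 ≤ w a b) :
    BddBelow (edgePointEccs G w) := by
  refine ⟨0, ?_⟩
  rintro _ ⟨a, b, -, α, hα, rfl⟩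
  exact Real.iSup_nonneg (edgePointDist_nonneg hw hα)

theorem wdiam_le_sInf_spanningTreeDiams [Finite V] (hG : G.Connected)
    (hw : ∀ a b, G.Adj a b → 0 ≤ w a b) : wdiam G w ≤ sInf (spanningTreeDiams G w) := by
  refine le_csInf (spanningTreeDiams_nonempty hG) ?_
  rintro _ ⟨T, hTG, hT, rfl⟩
  exact wdiam_anti hT.connected hTG hw

theorem sInf_spanningTreeDiams_le_two_mul_radius [Finite V] (hG : G.Connected)
    (hw : ∀ a b, G.Adj a b → 0 < w a b) (hws : ∀ a b, w a b = w b a) :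
    sInf (spanningTreeDiams G w) ≤ 2 * ⨅ v : V, ⨆ z : V, wdist G w v z := by
  have := hG.nonempty
  obtain ⟨r, hr⟩ := exists_eq_ciInf_of_finite (f := fun v : V => ⨆ z : V, wdist G w v z)
  rw [← hr]
  exact sInf_spanningTreeDiams_le (fun a b h => (hw a b h).le)
    (exists_isTree_wdist_le_of_wdist_root_le hG hw hws (le_ciSup (Set.finite_range _).bddAbove))

theorem sInf_spanningTreeDiams_le_two_mul_sInf_edgePointEccs [Finite V] (hG : G.Connected)
    (hw : ∀ a b, G.Adj a b → 0 < w a b) (hws : ∀ a b, w a b = w b a) (hE : ∃ a b, G.Adj a b) :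
    sInf (spanningTreeDiams G w) ≤ 2 * sInf (edgePointEccs G w) := by
  have := hG.nonempty
  have hw₀ : ∀ a b, G.Adj a b → 0 ≤ w a b := fun a b h => (hw a b h).le
  rw [← div_le_iff₀' two_pos]
  refine le_csInf (edgePointEccs_nonempty hw₀ hE) ?_
  rintro _ ⟨a, b, hab, α, hα, rfl⟩
  rw [div_le_iff₀' two_pos]
  exact sInf_spanningTreeDiams_le hw₀ (exists_isTree_wdist_le_of_edgePointDist_le hG hw hws hab hα
    (le_ciSup (Set.finite_range _).bddAbove))

theorem two_mul_sInf_edgePointEccs_le_sInf_spanningTreeDiams [Finite V] [Nontrivial V]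
    (hG : G.Connected) (hw : ∀ a b, G.Adj a b → 0 < w a b) (hws : ∀ a b, w a b = w b a) :
    2 * sInf (edgePointEccs G w) ≤ sInf (spanningTreeDiams G w) := by
  have hw₀ : ∀ a b, G.Adj a b → 0 ≤ w a b := fun a b h => (hw a b h).le
  refine le_csInf (spanningTreeDiams_nonempty hG) ?_
  rintro _ ⟨T, hTG, hT, rfl⟩
  have hTw : ∀ a b, T.Adj a b → 0 < w a b := fun a b h => hw a b (hTG h)
  obtain ⟨u, v, huv⟩ := exists_wdist_eq_wdiam T w
  obtain ⟨a, b, hab, α, hα, hhalf⟩ := exists_edgePointDist_le_half (u := u) (v := v) hT hTw hws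
    (huv ▸ wdiam_pos hT.connected hTw) (huv ▸ wdist_le_wdiam T w)
  rw [← le_div_iff₀' two_pos, ← huv]
  calc sInf (edgePointEccs G w)
      ≤ ⨆ z : V, edgePointDist G w a b α z :=
        csInf_le (bddBelow_edgePointEccs hw₀) ⟨a, b, hTG hab, α, hα, rfl⟩
    _ ≤ wdist T w u v / 2 :=
        ciSup_le fun z => (edgePointDist_anti hT.connected hTG hw₀ a b α z).trans (hhalf z)

end MinimumDiameter

/-- The minimum, over all spanning trees `T` of `G`, of the diameter `D(T)`
equals exactly `2 · R_gen(G)`, twice the generalized radius of `G`; moreover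
`D(G) ≤ min_T D(T) ≤ 2 · R(G)`, where `R(G)` is the (vertex) radius of `G`. -/
theorem stmt17 {V : Type*} [Fintype V] (G : SimpleGraph V) (hG : G.Connected)
    (w : V → V → ℝ) (hw : ∀ a b : V, G.Adj a b → 0 < w a b)
    (hws : ∀ a b : V, w a b = w b a)
    (hE : ∃ a b : V, G.Adj a b) :
    sInf {x : ℝ | ∃ T : SimpleGraph V, T ≤ G ∧ T.IsTree ∧
        x = ⨆ u : V, ⨆ v : V, wdist T w u v} =
      2 * sInf {x : ℝ | ∃ a b : V, G.Adj a b ∧ ∃ α ∈ Set.Icc 0 (w a b),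
        x = ⨆ z : V, min (α + wdist G w a z) (w a b - α + wdist G w b z)} ∧
    (⨆ u : V, ⨆ v : V, wdist G w u v) ≤
      sInf {x : ℝ | ∃ T : SimpleGraph V, T ≤ G ∧ T.IsTree ∧
        x = ⨆ u : V, ⨆ v : V, wdist T w u v} ∧
    sInf {x : ℝ | ∃ T : SimpleGraph V, T ≤ G ∧ T.IsTree ∧
        x = ⨆ u : V, ⨆ v : V, wdist T w u v} ≤
      2 * ⨅ v : V, ⨆ z : V, wdist G w v z := by
  obtain ⟨a, b, hab⟩ := hE
  have : Nontrivial V := ⟨a, b, hab.ne⟩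
  exact ⟨le_antisymm
      (sInf_spanningTreeDiams_le_two_mul_sInf_edgePointEccs hG hw hws ⟨a, b, hab⟩)
      (two_mul_sInf_edgePointEccs_le_sInf_spanningTreeDiams hG hw hws),
    wdiam_le_sInf_spanningTreeDiams hG fun a b h => (hw a b h).le,
    sInf_spanningTreeDiams_le_two_mul_radius hG hw hws⟩
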